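/- Fix N ≥ 1, h > 0, an integer p ≥ 1, τ > 0, and real N×N matrices D₁, D₂ such that D₁ is antisymmetric (D₁ᵀ = −D₁) and every row sum of D₁ is zero. Let u, u' : Fin N → ℝ satisfy (u'_j)² ≠ (u_j)² for every j, define the nonlinear vector w : Fin N → ℝ by w_j = (1/(p·(p+1)))·(((u'_j)^{p+1} − (u_j)^{p+1})/((u'_j)² − (u_j)²))·(u'_j + u_j), and suppose the modified Crank–Nicolson relation u' − u + τ·D₁·((1/2)·D₂·(u' + u) + w) = 0 holds. Then ⟨u', 1⟩_h = ⟨u, 1⟩_h, where 1 is the all-ones vector. (Momentum part of Proposition 5.1 in the Fourier pseudo-spectral fully discrete setting.) -/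

import Mathlib

/-!
Summing the scheme over all grid points kills the flux term: since `D₁` is antisymmetric with zero
row sums, its column sums vanish too, so `∑ i, (D₁ x) i = 0` for every vector `x`
(`sum_mulVec_eq_zero`). Hence `∑ j, u' j = ∑ j, u j`, whatever the form of the nonlinearity `w`.
-/

open scoped BigOperators

noncomputable section

/-- Discrete inner product `⟨u, w⟩_h = h·∑ j, u j * w j`. -/
def dip {N : ℕ} (h : ℝ) (u w : Fin N → ℝ) : ℝ := h * ∑ j, u j * w j

/-- Componentwise power `u^{⊙p}`. -/
def pw {N : ℕ} (p : ℕ) (u : Fin N → ℝ) : Fin N → ℝ := fun j => (u j) ^ p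

/-- The SAV square root `r(u) = √(⟨u^{⊙p}, u⟩_h + C₀)`. -/
def rad {N : ℕ} (h : ℝ) (p : ℕ) (C₀ : ℝ) (u : Fin N → ℝ) : ℝ :=
  Real.sqrt (dip h (pw p u) u + C₀)

/-- The SAV vector field `f(u, v) = −D₁·(D₂·u + (v/(p·r(u)))·u^{⊙p})`. -/
def fSAV {N : ℕ} (h : ℝ) (p : ℕ) (C₀ : ℝ) (D₁ D₂ : Matrix (Fin N) (Fin N) ℝ)
    (u : Fin N → ℝ) (v : ℝ) : Fin N → ℝ :=
  -(D₁.mulVec (D₂.mulVec u + (v / ((p : ℝ) * rad h p C₀ u)) • pw p u))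

/-- The SAV scalar field `g(u, v) = ((p+1)/(2·r(u)))·⟨u^{⊙p}, f(u, v)⟩_h`. -/
def gSAV {N : ℕ} (h : ℝ) (p : ℕ) (C₀ : ℝ) (D₁ D₂ : Matrix (Fin N) (Fin N) ℝ)
    (u : Fin N → ℝ) (v : ℝ) : ℝ :=
  (((p : ℝ) + 1) / (2 * rad h p C₀ u)) * dip h (pw p u) (fSAV h p C₀ D₁ D₂ u v)

/-- The columns of an antisymmetric matrix with zero row sums also sum to zero, so every vector in
its range has zero total. -/
lemma sum_mulVec_eq_zero {N : ℕ} (D : Matrix (Fin N) (Fin N) ℝ) (hD : D.transpose = -D)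
    (hrow : ∀ i, ∑ j, D i j = 0) (x : Fin N → ℝ) : ∑ i, D.mulVec x i = 0 := by
  have hcol : ∀ j, ∑ i, D i j = 0 := fun j => by
    have hji : ∀ i, D i j = -D j i := fun i => congrFun (congrFun hD j) i
    simp only [hji, Finset.sum_neg_distrib, hrow, neg_zero]
  simp only [Matrix.mulVec, dotProduct]
  rw [Finset.sum_comm]
  simp only [← Finset.sum_mul, hcol, zero_mul, Finset.sum_const_zero]

/-- Momentum part of Proposition 5.1: the modified Crank–Nicolson scheme conserves the
discrete momentum. -/
theorem MCN_momentum_conserved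
    (N : ℕ) (hN : 1 ≤ N) (h : ℝ) (hh : 0 < h) (p : ℕ) (hp : 1 ≤ p)
    (τ : ℝ) (hτ : 0 < τ)
    (D₁ D₂ : Matrix (Fin N) (Fin N) ℝ)
    (hD₁ : D₁.transpose = -D₁) (hrow : ∀ i, ∑ j, D₁ i j = 0)
    (u u' : Fin N → ℝ) (hne : ∀ j, (u' j) ^ 2 ≠ (u j) ^ 2)
    (w : Fin N → ℝ)
    (hw : w = fun j => (1 / ((p : ℝ) * ((p : ℝ) + 1)))
      * (((u' j) ^ (p + 1) - (u j) ^ (p + 1)) / ((u' j) ^ 2 - (u j) ^ 2))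
      * (u' j + u j))
    (hMCN : u' - u + τ • D₁.mulVec ((1 / 2 : ℝ) • D₂.mulVec (u' + u) + w) = 0) :
    dip h u' (fun _ => 1) = dip h u (fun _ => 1) := by
  have hsum := congrArg (fun v : Fin N → ℝ => ∑ j, v j) hMCN
  simp only [Pi.add_apply, Pi.sub_apply, Pi.smul_apply, Pi.zero_apply, smul_eq_mul,
    Finset.sum_add_distrib, Finset.sum_sub_distrib, ← Finset.mul_sum,
    sum_mulVec_eq_zero D₁ hD₁ hrow, Finset.sum_const_zero, mul_zero, add_zero] at hsum
  simp only [dip, mul_one, sub_eq_zero.mp hsum]
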